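/- For the first-order Chapman–Enskog coefficient f^(1) = −τ D₀ f^(eq) of the BGK equation, the deviatoric momentum flux is P^(1)_{αβ} := ∫ ξ_α ξ_β f^(1) dξ = −μ(∂_α u_β + ∂_β u_α − (2/D)(∇·u)δ_{αβ}) with μ = τp, where the Euler equations are used to eliminate the time derivatives ∂_{t₀}ρ, ∂_{t₀}u, ∂_{t₀}T. -/

import Mathlib

/-!
Write `θ = R₀ T` and `c = ξ - u`. Differentiating the logarithm of the Maxwellian along a curve of
parameters (`hasDerivAt_maxwellian`) gives every derivative in `D₀ f⁽ᵉᑫ⁾`. The Euler equations, put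
in primitive form (`euler_primitive`), eliminate the time derivatives, and what is left
(`log_deriv_eq`) is

  `D₀ log f⁽ᵉᑫ⁾ = ∑ γ δ, A γ δ c_γ c_δ + (c · ∇T / T) (|c|² / (2θ) - (D + 2) / 2)`,

where `A = (∇u - (∇ · u / D) I) / θ` is traceless.

It remains to integrate `ξ_α ξ_β = (c + u)_α (c + u)_β` against this expression and a centred
Gaussian in `c` (`stress_moment`). The second and fourth Gaussian moments follow from integration
by parts (`stein`), and odd moments vanish. The quadratic form has mean `θ tr A = 0` and
`c_α c_β`-moment `θ² (A α β + A β α)`; the heat-flux term is odd in `c` and orthogonal to each `c_α`.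
The Gaussian has mass `(2πθ)^(D/2)`, which cancels the normalisation of the Maxwellian, and
`-τ ρ θ² (A + Aᵀ)` is the viscous stress with `μ = τ ρ R₀ T`.
-/

open MeasureTheory Real

/-- The `D`-dimensional Maxwellian distribution. -/
noncomputable def maxwellian (D : ℕ) (ρ R₀ T : ℝ) (u : EuclideanSpace ℝ (Fin D))
    (ξ : EuclideanSpace ℝ (Fin D)) : ℝ :=
  ρ / (2 * π * R₀ * T) ^ ((D : ℝ) / 2) * exp (-‖ξ - u‖ ^ 2 / (2 * R₀ * T))

/-- The unnormalised centred Gaussian weight of variance `θ` in each coordinate. -/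
noncomputable def gaussWeight (D : ℕ) (θ : ℝ) (c : EuclideanSpace ℝ (Fin D)) : ℝ :=
  exp (-‖c‖ ^ 2 / (2 * θ))

/-! ### Gaussian moments -/

section Gaussian

variable {D : ℕ} {θ : ℝ}

theorem coord_temperate (i : Fin D) :
    Function.HasTemperateGrowth (fun c : EuclideanSpace ℝ (Fin D) => c i) :=
  (EuclideanSpace.proj (𝕜 := ℝ) i).hasTemperateGrowth

theorem continuous_gaussWeight : Continuous (gaussWeight D θ) := by
  unfold gaussWeight; fun_prop

/-- Polynomial growth costs half of the Gaussian exponent: the constant comes from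
`(1 + r) ^ k ≤ k! * exp (1 + r)` and `r ≤ θ + r ^ 2 / (4 * θ)`. -/
theorem one_add_norm_pow_le (k : ℕ) (hθ : 0 < θ) :
    ∃ C : ℝ, ∀ r : ℝ, 0 ≤ r → (1 + r) ^ k *
      exp (-r ^ 2 / (2 * θ)) ≤ C * exp (-(1 / (4 * θ)) * r ^ 2) := by
  refine ⟨k.factorial * exp (1 + θ), fun r hr => ?_⟩
  have h1 : (1 + r) ^ k ≤ k.factorial * exp (1 + r) := by
    have := pow_div_factorial_le_exp (x := 1 + r) (by positivity) k
    rwa [div_le_iff₀ (by positivity), mul_comm] at this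
  calc (1 + r) ^ k * exp (-r ^ 2 / (2 * θ))
      ≤ (k.factorial * exp (1 + r)) * exp (-r ^ 2 / (2 * θ)) := by gcongr
    _ = k.factorial * exp (1 + r + -r ^ 2 / (2 * θ)) := by rw [mul_assoc, ← exp_add]
    _ ≤ k.factorial * exp (1 + θ + -(1 / (4 * θ)) * r ^ 2) := by
        gcongr ?_ * exp ?_
        have : 1 + θ + -(1 / (4 * θ)) * r ^ 2 - (1 + r + -r ^ 2 / (2 * θ)) =
            (r - 2 * θ) ^ 2 / (4 * θ) := by
          field_simp; ring
        have h2 : 0 ≤ (r - 2 * θ) ^ 2 / (4 * θ) := by positivity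
        linarith
    _ = _ := by rw [exp_add, mul_assoc]

theorem integrable_mul_gaussWeight (hθ : 0 < θ) {g : EuclideanSpace ℝ (Fin D) → ℝ}
    (hg : g.HasTemperateGrowth) : Integrable (fun c => g c * gaussWeight D θ c) := by
  obtain ⟨k, C, hC0, hC⟩ := hg.norm_iteratedFDeriv_le_uniform 0
  obtain ⟨C', hC'⟩ := one_add_norm_pow_le k hθ
  have hint : Integrable
      (fun c : EuclideanSpace ℝ (Fin D) => exp (-(1 / (4 * θ)) * ‖c‖ ^ 2)) := by
    have := GaussianFourier.integrable_cexp_neg_mul_sq_norm_add (b := ((1 / (4 * θ) : ℝ) : ℂ))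
      (by rw [Complex.ofReal_re]; positivity) 0 (0 : EuclideanSpace ℝ (Fin D))
    refine this.norm.congr (.of_forall fun c => ?_)
    simp only [Complex.norm_exp]
    norm_num [← Complex.ofReal_pow]
  refine (hint.const_mul (C * C')).mono'
    ((hg.1.continuous.mul continuous_gaussWeight).aestronglyMeasurable) (.of_forall fun c => ?_)
  have h1 := hC 0 le_rfl c
  rw [norm_iteratedFDeriv_zero] at h1
  have h2 := hC' ‖c‖ (norm_nonneg c)
  rw [norm_mul, gaussWeight, norm_of_nonneg (exp_pos _).le]
  calc ‖g c‖ * exp (-‖c‖ ^ 2 / (2 * θ))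
      ≤ (C * (1 + ‖c‖) ^ k) * exp (-‖c‖ ^ 2 / (2 * θ)) := by gcongr
    _ = C * ((1 + ‖c‖) ^ k * exp (-‖c‖ ^ 2 / (2 * θ))) := by ring
    _ ≤ C * (C' * exp (-(1 / (4 * θ)) * ‖c‖ ^ 2)) := by gcongr
    _ = _ := by ring

theorem hasLineDerivAt_coord (i j : Fin D) (c : EuclideanSpace ℝ (Fin D)) :
    HasLineDerivAt ℝ (fun c : EuclideanSpace ℝ (Fin D) => c j) (if i = j then 1 else 0) c
      (EuclideanSpace.single i 1) := by
  have := ((EuclideanSpace.proj (𝕜 := ℝ) j).hasFDerivAt (x := c)).hasLineDerivAt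
    (EuclideanSpace.single i (1 : ℝ))
  simpa [Pi.single_apply, eq_comm] using this

theorem hasLineDerivAt_gaussWeight (i : Fin D) (c : EuclideanSpace ℝ (Fin D)) :
    HasLineDerivAt ℝ (gaussWeight D θ) (-(c i / θ) * gaussWeight D θ c) c
      (EuclideanSpace.single i 1) := by
  have h := (((hasStrictFDerivAt_norm_sq c).hasFDerivAt.neg.mul_const (2 * θ)⁻¹).exp).hasLineDerivAt
    (EuclideanSpace.single i (1 : ℝ))
  simp only [← div_eq_mul_inv] at h
  convert! h using 1
  simp [gaussWeight, EuclideanSpace.inner_single_right, neg_div]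
  field_simp

/-- Gaussian integration by parts (Stein's identity). -/
theorem stein (hθ : 0 < θ) (i : Fin D) {g g' : EuclideanSpace ℝ (Fin D) → ℝ}
    (hg : g.HasTemperateGrowth) (hg' : g'.HasTemperateGrowth)
    (hd : ∀ c, HasLineDerivAt ℝ g (g' c) c (EuclideanSpace.single i 1)) :
    ∫ c, c i * g c * gaussWeight D θ c = θ * ∫ c, g' c * gaussWeight D θ c := by
  have hi := coord_temperate i
  have key := integral_bilinear_hasLineDerivAt_right_eq_neg_left_of_integrable
    (μ := (volume : Measure (EuclideanSpace ℝ (Fin D))))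
    (f := g) (f' := g') (g := gaussWeight D θ) (g' := fun c => -(c i / θ) * gaussWeight D θ c)
    (v := EuclideanSpace.single i 1) (B := ContinuousLinearMap.mul ℝ ℝ)
    (integrable_mul_gaussWeight hθ hg')
    (by
      refine (integrable_mul_gaussWeight hθ (g := fun c => (-θ⁻¹) * (c i * g c))
        (by fun_prop)).congr (.of_forall fun c => ?_)
      simp only [ContinuousLinearMap.mul_apply']
      ring)
    (integrable_mul_gaussWeight hθ hg) (fun c _ => hd c)
    (fun c _ => hasLineDerivAt_gaussWeight i c)
  simp only [ContinuousLinearMap.mul_apply'] at key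
  have e : (fun c : EuclideanSpace ℝ (Fin D) => g c * (-(c i / θ) * gaussWeight D θ c)) =
      fun c => (-θ⁻¹) * (c i * g c * gaussWeight D θ c) := by
    ext c; ring
  rw [e, integral_const_mul] at key
  field_simp at key
  linarith

theorem moment_two (hθ : 0 < θ) (i j : Fin D) :
    ∫ c, c i * c j * gaussWeight D θ c =
      θ * (if i = j then 1 else 0) * ∫ c, gaussWeight D θ c := by
  rw [stein hθ i (coord_temperate j) (.const _) (hasLineDerivAt_coord i j), integral_const_mul,
    mul_assoc]

/-- Wick's formula for the fourth moments. -/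
theorem moment_four (hθ : 0 < θ) (i j k l : Fin D) :
    ∫ c, c i * c j * (c k * c l) * gaussWeight D θ c =
      θ ^ 2 * ((if i = j then 1 else 0) * (if k = l then 1 else 0) +
        (if i = k then 1 else 0) * (if j = l then 1 else 0) +
        (if i = l then 1 else 0) * (if j = k then 1 else 0)) * ∫ c, gaussWeight D θ c := by
  have hj := coord_temperate j
  have hk := coord_temperate k
  have hl := coord_temperate l
  have h := stein hθ i (g := fun c => c j * (c k * c l))
    (g' := fun c => (if i = j then 1 else 0) * (c k * c l) +
      c j * ((if i = k then 1 else 0) * c l + c k * (if i = l then 1 else 0)))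
    (by fun_prop) (by fun_prop) (fun c => by
      have := HasDerivAt.mul (hasLineDerivAt_coord i j c)
        (HasDerivAt.mul (hasLineDerivAt_coord i k c) (hasLineDerivAt_coord i l c))
      simpa [HasLineDerivAt, Pi.mul_def] using this)
  have e : (fun c : EuclideanSpace ℝ (Fin D) => c i * c j * (c k * c l) * gaussWeight D θ c) =
      fun c => c i * (c j * (c k * c l)) * gaussWeight D θ c := by ext c; ring
  have e' : (fun c : EuclideanSpace ℝ (Fin D) => ((if i = j then 1 else 0) * (c k * c l) +
      c j * ((if i = k then 1 else 0) * c l + c k * (if i = l then 1 else 0)))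
        * gaussWeight D θ c) =
      fun c => ((if i = j then 1 else 0) * (c k * c l * gaussWeight D θ c) +
        (if i = k then 1 else 0) * (c j * c l * gaussWeight D θ c)) +
        (if i = l then 1 else 0) * (c j * c k * gaussWeight D θ c) := by ext c; ring
  have I (a b : Fin D) : Integrable (fun c => c a * c b * gaussWeight D θ c) :=
    integrable_mul_gaussWeight hθ ((coord_temperate a).fun_mul (coord_temperate b))
  rw [e, h, e', integral_add (((I k l).const_mul _).fun_add ((I j l).const_mul _))
    ((I j k).const_mul _), integral_add ((I k l).const_mul _) ((I j l).const_mul _)]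
  simp only [integral_const_mul, moment_two hθ]
  ring

theorem moment_odd {g : EuclideanSpace ℝ (Fin D) → ℝ} (hg : ∀ c, g (-c) = -g c) :
    ∫ c, g c * gaussWeight D θ c = 0 := by
  have h := integral_neg_eq_self (fun c => g c * gaussWeight D θ c) volume
  simp only [hg, neg_mul, integral_neg, gaussWeight, norm_neg] at h ⊢
  linarith

theorem integral_gaussWeight (hθ : 0 < θ) :
    ∫ c, gaussWeight D θ c = (2 * π * θ) ^ ((D : ℝ) / 2) := by
  have := GaussianFourier.integral_rexp_neg_mul_sq_norm (V := EuclideanSpace ℝ (Fin D))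
    (b := 1 / (2 * θ)) (by positivity)
  rw [finrank_euclideanSpace_fin] at this
  simp only [gaussWeight]
  convert this using 3
  · ring_nf
  · field_simp

/-- Second moments, in the velocity `ξ = c + v`, of a Gaussian in `c` times the first-order
correction. The quadratic part contributes `θ² (A + Aᵀ)` only, as `A` is traceless. The cubic
heat-flux part is odd, so it meets only `v β * c α + v α * c β`; there the constant `(D + 2) / 2`
cancels the contracted fourth moment `∑ δ, ⟨c_a c_γ c_δ²⟩ = θ² (D + 2) δ_{aγ}`, so the drift `v`
does not enter. -/
theorem stress_moment (hθ : 0 < θ) (A : Fin D → Fin D → ℝ) (hA : ∑ γ, A γ γ = 0)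
    (q : Fin D → ℝ) (v : EuclideanSpace ℝ (Fin D)) (α β : Fin D) :
    ∫ c : EuclideanSpace ℝ (Fin D), (c α + v α) * (c β + v β) *
      (∑ γ, ∑ δ, A γ δ * (c γ * c δ) +
        (∑ γ, q γ * c γ) * ((∑ δ, c δ * c δ) / (2 * θ) - (D + 2) / 2)) * gaussWeight D θ c =
      θ ^ 2 * (A α β + A β α) * ∫ c, gaussWeight D θ c := by
  have hc := coord_temperate (D := D)
  have W0 (g) (hg : Function.HasTemperateGrowth g) := integrable_mul_gaussWeight (D := D) hθ hg
  -- the mean of the quadratic part is `θ` times the trace of `A`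
  have hE0 : ∫ c : EuclideanSpace ℝ (Fin D),
      (∑ γ, ∑ δ, A γ δ * (c γ * c δ)) * gaussWeight D θ c = 0 := by
    simp_rw [Finset.sum_mul, mul_assoc (A _ _)]
    have I2 (γ δ : Fin D) := (W0 (fun c => c γ * c δ) (by fun_prop)).const_mul (A γ δ)
    rw [integral_finsetSum _ fun γ _ => integrable_finsetSum _ fun δ _ => I2 γ δ]
    simp_rw [fun γ => integral_finsetSum Finset.univ fun δ _ => I2 γ δ, integral_const_mul,
      moment_two hθ]
    simp only [mul_ite, ite_mul, mul_one, mul_zero, zero_mul, Finset.sum_ite_eq, Finset.mem_univ,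
      if_true]
    rw [← Finset.sum_mul, hA, zero_mul]
  have hE4 : ∫ c : EuclideanSpace ℝ (Fin D),
      c α * c β * (∑ γ, ∑ δ, A γ δ * (c γ * c δ)) * gaussWeight D θ c =
      θ ^ 2 * (A α β + A β α) * ∫ c, gaussWeight D θ c := by
    have e : (fun c : EuclideanSpace ℝ (Fin D) =>
        c α * c β * (∑ γ, ∑ δ, A γ δ * (c γ * c δ)) * gaussWeight D θ c) =
        fun c => ∑ γ, ∑ δ, A γ δ * (c α * c β * (c γ * c δ) * gaussWeight D θ c) := by
      ext c
      simp only [Finset.mul_sum, Finset.sum_mul]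
      exact Finset.sum_congr rfl fun _ _ => Finset.sum_congr rfl fun _ _ => by ring
    have I4 (γ δ : Fin D) :=
      (W0 (fun c => c α * c β * (c γ * c δ)) (by fun_prop)).const_mul (A γ δ)
    rw [e, integral_finsetSum _ fun γ _ => integrable_finsetSum _ fun δ _ => I4 γ δ]
    simp_rw [fun γ => integral_finsetSum Finset.univ fun δ _ => I4 γ δ, integral_const_mul,
      moment_four hθ]
    generalize (∫ c, gaussWeight D θ c) = Z
    have e2 (γ δ : Fin D) : A γ δ * (θ ^ 2 * ((if α = β then 1 else 0) * (if γ = δ then 1 else 0) +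
        (if α = γ then 1 else 0) * (if β = δ then 1 else 0) +
        (if α = δ then 1 else 0) * (if β = γ then 1 else 0)) * Z) =
        θ ^ 2 * Z * ((if α = β then 1 else 0) * (if γ = δ then A γ δ else 0) +
        (if α = γ then (if β = δ then A γ δ else 0) else 0) +
        (if β = γ then (if α = δ then A γ δ else 0) else 0)) := by
      split_ifs <;> ring
    simp_rw [e2, ← Finset.mul_sum, Finset.sum_add_distrib, ← Finset.mul_sum]
    simp [hA]
    ring
  -- the heat-flux part carries no momentum
  have hO (a : Fin D) : ∫ c : EuclideanSpace ℝ (Fin D), c a *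
      ((∑ γ, q γ * c γ) * ((∑ δ, c δ * c δ) / (2 * θ) - (D + 2) / 2)) * gaussWeight D θ c = 0 := by
    have e : (fun c : EuclideanSpace ℝ (Fin D) => c a *
        ((∑ γ, q γ * c γ) * ((∑ δ, c δ * c δ) / (2 * θ) - (D + 2) / 2)) * gaussWeight D θ c) =
        fun c => ∑ γ, q γ * (∑ δ, (2 * θ)⁻¹ * (c a * c γ * (c δ * c δ) * gaussWeight D θ c)
          - (D + 2) / 2 * (c a * c γ * gaussWeight D θ c)) := by
      ext c
      have (γ : Fin D) : ∑ δ, (2 * θ)⁻¹ * (c a * c γ * (c δ * c δ) * gaussWeight D θ c) =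
          (2 * θ)⁻¹ * (c a * c γ * (∑ δ, c δ * c δ) * gaussWeight D θ c) := by
        simp only [Finset.mul_sum, Finset.sum_mul]
      simp_rw [this]
      rw [Finset.sum_mul, Finset.mul_sum, Finset.sum_mul]
      exact Finset.sum_congr rfl fun _ _ => by ring
    have I4 (γ δ : Fin D) := (W0 (fun c => c a * c γ * (c δ * c δ)) (by fun_prop)).const_mul
      (2 * θ)⁻¹
    have I2 (γ : Fin D) := (W0 (fun c => c a * c γ) (by fun_prop)).const_mul ((D + 2 : ℝ) / 2)
    have I4s (γ : Fin D) := integrable_finsetSum Finset.univ fun δ _ => I4 γ δ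
    have contracted (γ δ : Fin D) : ∫ c, c a * c γ * (c δ * c δ) * gaussWeight D θ c =
        θ ^ 2 * (∫ c, gaussWeight D θ c) *
          ((if a = γ then 1 else 0) + 2 * (if a = δ then (if γ = δ then 1 else 0) else 0)) := by
      rw [moment_four hθ, if_pos (rfl : δ = δ)]
      split_ifs <;> ring
    have I42 (γ : Fin D) : Integrable (fun c : EuclideanSpace ℝ (Fin D) =>
        ∑ δ, (2 * θ)⁻¹ * (c a * c γ * (c δ * c δ) * gaussWeight D θ c)
          - (D + 2) / 2 * (c a * c γ * gaussWeight D θ c)) := (I4s γ).sub (I2 γ)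
    rw [e, integral_finsetSum _ fun γ _ => (I42 γ).const_mul _]
    refine Finset.sum_eq_zero fun γ _ => ?_
    rw [integral_const_mul, integral_sub (I4s γ) (I2 γ), integral_finsetSum _ fun δ _ => I4 γ δ]
    simp_rw [integral_const_mul, contracted, moment_two hθ]
    generalize (∫ c, gaussWeight D θ c) = Z
    simp_rw [← Finset.mul_sum, Finset.sum_add_distrib, ← Finset.mul_sum]
    simp only [Finset.sum_const, Finset.card_univ, Fintype.card_fin, nsmul_eq_mul,
      Finset.sum_ite_eq, Finset.mem_univ, if_true, eq_comm (a := γ)]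
    split_ifs
    · field_simp; ring
    · simp
  -- the remaining terms form an odd function
  have hodd := moment_odd (θ := θ) (g := fun c : EuclideanSpace ℝ (Fin D) =>
      (v α * c β + v β * c α) * (∑ γ, ∑ δ, A γ δ * (c γ * c δ)) +
      (c α * c β + v α * v β) *
        ((∑ γ, q γ * c γ) * ((∑ δ, c δ * c δ) / (2 * θ) - (D + 2) / 2))) (fun c => by
      simp only [PiLp.neg_apply, mul_neg, neg_mul, neg_neg, Finset.sum_neg_distrib]
      ring)
  have split : (fun c : EuclideanSpace ℝ (Fin D) => (c α + v α) * (c β + v β) *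
      (∑ γ, ∑ δ, A γ δ * (c γ * c δ) +
        (∑ γ, q γ * c γ) * ((∑ δ, c δ * c δ) / (2 * θ) - (D + 2) / 2)) * gaussWeight D θ c) =
      fun c => (((c α * c β * (∑ γ, ∑ δ, A γ δ * (c γ * c δ)) * gaussWeight D θ c +
        v α * v β * ((∑ γ, ∑ δ, A γ δ * (c γ * c δ)) * gaussWeight D θ c)) +
        v β * (c α *
          ((∑ γ, q γ * c γ) * ((∑ δ, c δ * c δ) / (2 * θ) - (D + 2) / 2)) * gaussWeight D θ c)) +
        v α * (c β *
          ((∑ γ, q γ * c γ) * ((∑ δ, c δ * c δ) / (2 * θ) - (D + 2) / 2)) * gaussWeight D θ c)) +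
        ((v α * c β + v β * c α) * (∑ γ, ∑ δ, A γ δ * (c γ * c δ)) +
          (c α * c β + v α * v β) *
          ((∑ γ, q γ * c γ) * ((∑ δ, c δ * c δ) / (2 * θ) - (D + 2) / 2))) * gaussWeight D θ c := by
    ext c; ring
  have hE : Function.HasTemperateGrowth (fun c : EuclideanSpace ℝ (Fin D) =>
      ∑ γ, ∑ δ, A γ δ * (c γ * c δ)) :=
    .sum fun γ _ => .sum fun δ _ => by fun_prop
  have hq : Function.HasTemperateGrowth (fun c : EuclideanSpace ℝ (Fin D) =>
      (∑ γ, q γ * c γ) * ((∑ δ, c δ * c δ) / (2 * θ) - (D + 2) / 2)) := by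
    have h1 : Function.HasTemperateGrowth (fun c : EuclideanSpace ℝ (Fin D) => ∑ γ, q γ * c γ) :=
      .sum fun γ _ => by fun_prop
    have h2 : Function.HasTemperateGrowth (fun c : EuclideanSpace ℝ (Fin D) => ∑ δ, c δ * c δ) :=
      .sum fun γ _ => by fun_prop
    simp only [div_eq_mul_inv]
    fun_prop
  have J1 := W0 _ (((hc α).fun_mul (hc β)).fun_mul hE)
  have J2 := (W0 _ hE).const_mul (v α * v β)
  have J3 (a b : Fin D) := (W0 _ ((hc a).fun_mul hq)).const_mul (v b)
  have J4 := W0 (fun c : EuclideanSpace ℝ (Fin D) =>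
      (v α * c β + v β * c α) * (∑ γ, ∑ δ, A γ δ * (c γ * c δ)) +
      (c α * c β + v α * v β) *
        ((∑ γ, q γ * c γ) * ((∑ δ, c δ * c δ) / (2 * θ) - (D + 2) / 2))) (by
      refine .fun_add (.fun_mul ?_ hE) (.fun_mul ?_ hq) <;> fun_prop)
  rw [split, integral_add (((J1.fun_add J2).fun_add (J3 α β)).fun_add (J3 β α)) J4,
    integral_add ((J1.fun_add J2).fun_add (J3 α β)) (J3 β α),
    integral_add (J1.fun_add J2) (J3 α β), integral_add J1 J2]
  simp only [integral_const_mul]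
  rw [hE4, hE0, hO, hO, hodd]
  ring

end Gaussian

/-! ### The Maxwellian and the Euler equations -/

section Kinetic

variable {D : ℕ}

theorem maxwellian_eq (ρ R T : ℝ) (v ξ : EuclideanSpace ℝ (Fin D)) :
    maxwellian D ρ R T v ξ =
      ρ / (2 * π * R * T) ^ ((D : ℝ) / 2) * gaussWeight D (R * T) (ξ - v) := by
  rw [maxwellian, gaussWeight, mul_assoc 2 R T]

/-- Logarithmic differentiation of the Maxwellian along a curve of parameters `(r, T, v)`. -/
theorem hasDerivAt_maxwellian {R : ℝ} (hR : 0 < R) {r T : ℝ → ℝ}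
    {v : ℝ → EuclideanSpace ℝ (Fin D)} {r' T' s : ℝ} {v' : EuclideanSpace ℝ (Fin D)}
    (hr : HasDerivAt r r' s) (hT : HasDerivAt T T' s) (hv : HasDerivAt v v' s)
    (hr0 : 0 < r s) (hT0 : 0 < T s) (ξ : EuclideanSpace ℝ (Fin D)) :
    HasDerivAt (fun s => maxwellian D (r s) R (T s) (v s) ξ)
      (maxwellian D (r s) R (T s) (v s) ξ *
        (r' / r s + ((∑ δ, (ξ δ - v s δ) * (ξ δ - v s δ)) / (2 * (R * T s)) - D / 2) * (T' / T s) +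
          (∑ γ, (ξ γ - v s γ) * v' γ) / (R * T s))) s := by
  have hpos : 0 < 2 * π * R * T s := by positivity
  have hZ := (hT.const_mul (2 * π * R)).rpow_const (p := (D : ℝ) / 2) (Or.inl hpos.ne')
  have hn := (hv.const_sub ξ).norm_sq
  have hE := (hn.fun_neg.fun_div (hT.const_mul (2 * R)) (by positivity)).exp
  have h := (hr.fun_div hZ (by positivity)).fun_mul hE
  refine h.congr_deriv ?_
  have e1 : ‖ξ - v s‖ ^ 2 = ∑ δ, (ξ δ - v s δ) * (ξ δ - v s δ) := by
    rw [EuclideanSpace.real_norm_sq_eq]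
    exact Finset.sum_congr rfl fun _ _ => by simp [sq]
  have e2 : inner ℝ (ξ - v s) (-v') = -∑ γ, (ξ γ - v s γ) * v' γ := by
    rw [inner_neg_right, PiLp.inner_apply]
    simp [mul_comm]
  rw [Real.rpow_sub_one hpos.ne', maxwellian, e1, e2]
  have hZ0 : 0 < (2 * π * R * T s) ^ ((D : ℝ) / 2) := by positivity
  generalize (2 * π * R * T s) ^ ((D : ℝ) / 2) = Z at hZ0
  generalize (∑ δ, (ξ δ - v s δ) * (ξ δ - v s δ)) = K
  generalize (∑ γ, (ξ γ - v s γ) * v' γ) = L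
  generalize exp (-K / (2 * R * T s)) = E
  field_simp
  ring

/-- The Euler equations in primitive form, at a single point: from the conservation laws, with
derivatives already expanded, to the evolution of `ρ`, `u` and `T`. Here `ρx α`, `Tx α` and
`G α β` stand for `∂_α ρ`, `∂_α T` and `∂_α u_β`. -/
theorem euler_primitive (hD : 1 ≤ D) {R ρ T ρt Tt : ℝ} (hR : 0 < R) (hρ : 0 < ρ)
    {u ut ρx Tx : Fin D → ℝ} {G : Fin D → Fin D → ℝ}
    (mass : ρt + ∑ α, (ρx α * u α + ρ * G α α) = 0)
    (mom : ∀ β, ρt * u β + ρ * ut β + ∑ α, ((ρx α * u α + ρ * G α α) * u β + ρ * u α * G α β +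
      if α = β then ρx α * R * T + ρ * R * Tx α else 0) = 0)
    (energy : ρt * (D * R / 2 * T + (∑ β, u β * u β) / 2) +
      ρ * (D * R / 2 * Tt + ∑ β, u β * ut β) +
      ∑ α, ((ρx α * (D * R / 2 * T + (∑ β, u β * u β) / 2) +
          ρ * (D * R / 2 * Tx α + ∑ β, u β * G α β) +
          (ρx α * R * T + ρ * R * Tx α)) * u α +
        (ρ * (D * R / 2 * T + (∑ β, u β * u β) / 2) + ρ * R * T) * G α α) = 0) :
    ρt = -(∑ α, u α * ρx α) - ρ * ∑ α, G α α ∧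
    (∀ β, ut β = -(∑ α, u α * G α β) - R * T / ρ * ρx β - R * Tx β) ∧
    Tt = -(∑ α, u α * Tx α) - 2 / D * T * ∑ α, G α α := by
  have hm : ρt = -(∑ α, u α * ρx α) - ρ * ∑ α, G α α := by
    rw [Finset.sum_add_distrib, ← Finset.mul_sum] at mass
    simp only [mul_comm (ρx _)] at mass
    linarith
  have hu (β) : ut β = -(∑ α, u α * G α β) - R * T / ρ * ρx β - R * Tx β := by
    have h := mom β
    rw [Finset.sum_add_distrib, Finset.sum_add_distrib, ← Finset.sum_mul] at h
    simp only [mul_assoc ρ, ← Finset.mul_sum, Finset.sum_ite_eq', Finset.mem_univ, if_true] at h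
    have : ρ * ut β = -(ρ * ∑ α, u α * G α β) - R * T * ρx β - ρ * (R * Tx β) := by
      linear_combination h - u β * mass
    field_simp
    linear_combination this
  refine ⟨hm, hu, ?_⟩
  have hD0 : (0 : ℝ) < D := by exact_mod_cast hD
  have hU : ∑ β, u β * ut β = -(∑ α, u α * ∑ β, u β * G α β) - R * T / ρ * (∑ α, u α * ρx α) -
      R * ∑ α, u α * Tx α := by
    simp only [hu, mul_sub, Finset.sum_sub_distrib, mul_neg, Finset.sum_neg_distrib,
      Finset.mul_sum]
    rw [Finset.sum_comm]
    congr! 2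
    · refine congrArg Neg.neg (Finset.sum_congr rfl fun _ _ => Finset.sum_congr rfl fun _ _ => ?_)
      ring
    · exact Finset.sum_congr rfl fun _ _ => by ring
    · ring
  generalize (∑ β, u β * u β) = K at energy
  have e : ∑ α, ((ρx α * (D * R / 2 * T + K / 2) +
          ρ * (D * R / 2 * Tx α + ∑ β, u β * G α β) +
          (ρx α * R * T + ρ * R * Tx α)) * u α +
        (ρ * (D * R / 2 * T + K / 2) + ρ * R * T) * G α α) =
      (D * R / 2 * T + K / 2 + R * T) * (∑ α, u α * ρx α) +
      ρ * (D * R / 2 + R) * (∑ α, u α * Tx α) + ρ * (∑ α, u α * ∑ β, u β * G α β) +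
      (ρ * (D * R / 2 * T + K / 2) + ρ * R * T) * ∑ α, G α α := by
    rw [Finset.mul_sum, Finset.mul_sum, Finset.mul_sum, Finset.mul_sum, ← Finset.sum_add_distrib,
      ← Finset.sum_add_distrib, ← Finset.sum_add_distrib]
    exact Finset.sum_congr rfl fun α _ => by ring
  rw [e, hU, hm] at energy
  generalize (∑ α, u α * ∑ β, u β * G α β) = V at energy
  generalize (∑ α, u α * ρx α) = Sρ at energy
  generalize (∑ α, u α * Tx α) = ST at energy ⊢
  generalize (∑ α, G α α) = d at energy ⊢
  have h2 : ρ * R * (D * Tt + D * ST + 2 * T * d) = 0 := by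
    field_simp at energy
    linear_combination energy
  have h3 : D * Tt + D * ST + 2 * T * d = 0 := by
    rcases mul_eq_zero.1 h2 with h | h
    · exact absurd h (by positivity)
    · exact h
  field_simp
  linear_combination h3

/-- After elimination of the time derivatives, `D₀ log f⁽ᵉᑫ⁾` is a traceless quadratic form in
the peculiar velocity `c = ξ - u` plus a heat-flux part proportional to `∇T`; all terms in `∇ρ`
cancel. -/
theorem log_deriv_eq (hD : 1 ≤ D) {R ρ T ρt Tt : ℝ} (hR : 0 < R) (hρ : 0 < ρ) (hT : 0 < T)
    {u ut ρx Tx : Fin D → ℝ} {G : Fin D → Fin D → ℝ}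
    (hρt : ρt = -(∑ α, u α * ρx α) - ρ * ∑ α, G α α)
    (hut : ∀ β, ut β = -(∑ α, u α * G α β) - R * T / ρ * ρx β - R * Tx β)
    (hTt : Tt = -(∑ α, u α * Tx α) - 2 / D * T * ∑ α, G α α) (c : Fin D → ℝ) :
    (ρt / ρ + ((∑ δ, c δ * c δ) / (2 * (R * T)) - D / 2) * (Tt / T) +
      (∑ γ, c γ * ut γ) / (R * T)) +
    ∑ α, (c α + u α) * (ρx α / ρ + ((∑ δ, c δ * c δ) / (2 * (R * T)) - D / 2) * (Tx α / T) +
      (∑ γ, c γ * G α γ) / (R * T)) =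
    ∑ γ, ∑ δ, ((G γ δ - if γ = δ then (∑ α, G α α) / D else 0) / (R * T)) * (c γ * c δ) +
      (∑ γ, Tx γ / T * c γ) * ((∑ δ, c δ * c δ) / (2 * (R * T)) - (D + 2) / 2) := by
  have hD0 : (0 : ℝ) < D := by exact_mod_cast hD
  have e1 : ∑ γ, c γ * ut γ = -(∑ α, u α * ∑ γ, c γ * G α γ) - R * T / ρ * (∑ α, c α * ρx α) -
      R * ∑ α, c α * Tx α := by
    simp only [hut, mul_sub, Finset.sum_sub_distrib, mul_neg, Finset.sum_neg_distrib,
      Finset.mul_sum]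
    rw [Finset.sum_comm]
    congr! 2
    · refine congrArg Neg.neg (Finset.sum_congr rfl fun _ _ => Finset.sum_congr rfl fun _ _ => ?_)
      ring
    · exact Finset.sum_congr rfl fun _ _ => by ring
    · ring
  have e2 : ∑ γ, ∑ δ, ((G γ δ - if γ = δ then (∑ α, G α α) / D else 0) / (R * T)) * (c γ * c δ) =
      (∑ α, c α * ∑ γ, c γ * G α γ) / (R * T) -
        (∑ α, G α α) / D / (R * T) * ∑ δ, c δ * c δ := by
    generalize (∑ α, G α α) / D = d
    simp only [sub_div, sub_mul, Finset.sum_sub_distrib, ite_div, zero_div, ite_mul, zero_mul,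
      Finset.sum_ite_eq, Finset.mem_univ, if_true, Finset.mul_sum, Finset.sum_div]
    congr! 3
    ring
  have e3 : ∑ γ, Tx γ / T * c γ = (∑ α, c α * Tx α) / T := by
    rw [Finset.sum_div]
    exact Finset.sum_congr rfl fun _ _ => by ring
  rw [e1, e2, e3, hρt, hTt]
  generalize (∑ δ, c δ * c δ) = K
  have e4 : ∑ α, (c α + u α) * (ρx α / ρ + (K / (2 * (R * T)) - D / 2) * (Tx α / T) +
      (∑ γ, c γ * G α γ) / (R * T)) =
      (∑ α, c α * ρx α) / ρ + (∑ α, u α * ρx α) / ρ +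
      (K / (2 * (R * T)) - D / 2) / T * ((∑ α, c α * Tx α) + ∑ α, u α * Tx α) +
      ((∑ α, c α * ∑ γ, c γ * G α γ) + (∑ α, u α * ∑ γ, c γ * G α γ)) / (R * T) := by
    simp only [Finset.sum_div, ← Finset.sum_add_distrib]
    rw [Finset.mul_sum, ← Finset.sum_add_distrib, ← Finset.sum_add_distrib]
    refine Finset.sum_congr rfl fun α _ => ?_
    rw [← Finset.sum_div]
    ring
  rw [e4]
  generalize (∑ α, c α * ∑ γ, c γ * G α γ) = V1
  generalize (∑ α, u α * ∑ γ, c γ * G α γ) = V2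
  field_simp
  ring

/-- Reduces partial derivatives to derivatives of one-variable curves, so that time and space
derivatives of the Maxwellian are instances of one formula. -/
theorem fderiv_apply_eq {E : Type*} [NormedAddCommGroup E] [NormedSpace ℝ E] {f : E → ℝ} {x e : E}
    {a : ℝ} (hf : DifferentiableAt ℝ f x) (h : HasDerivAt (fun s : ℝ => f (x + s • e)) a 0) :
    fderiv ℝ f x e = a := by
  rw [← hf.lineDeriv_eq_fderiv]
  exact HasLineDerivAt.lineDeriv h

theorem hasDerivAt_coord {v : ℝ → EuclideanSpace ℝ (Fin D)} {v' : EuclideanSpace ℝ (Fin D)} {s : ℝ}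
    (hv : HasDerivAt v v' s) (γ : Fin D) : HasDerivAt (fun s => v s γ) (v' γ) s :=
  (EuclideanSpace.proj (𝕜 := ℝ) γ).hasFDerivAt.comp_hasDerivAt s hv

theorem hasDerivAt_half_norm_sq {v : ℝ → EuclideanSpace ℝ (Fin D)}
    {v' : EuclideanSpace ℝ (Fin D)} {s : ℝ} (hv : HasDerivAt v v' s) :
    HasDerivAt (fun s => ‖v s‖ ^ 2 / 2) (∑ β, v s β * v' β) s := by
  refine (hv.norm_sq.div_const 2).congr_deriv ?_
  rw [PiLp.inner_apply]
  simp [mul_comm]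

end Kinetic

/-! ### The viscous stress -/

/-- For the first-order Chapman–Enskog coefficient `f⁽¹⁾ = −τ D₀ f⁽ᵉᑫ⁾` of the
BGK equation, with the fields `(ρ, u, T)` satisfying the compressible Euler
equations in `t₀`, the deviatoric momentum flux is the Navier–Stokes viscous
stress: `P⁽¹⁾_{αβ} = ∫ ξ_α ξ_β f⁽¹⁾ dξ
  = −μ(∂_α u_β + ∂_β u_α − (2/D)(∇·u)δ_{αβ})` with `μ = τ ρ R₀ T`. -/
theorem chapman_enskog_first_order_stress
    (D : ℕ) (hD : 1 ≤ D) (R₀ τ : ℝ) (hR₀ : 0 < R₀) (hτ : 0 < τ)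
    (ρ : EuclideanSpace ℝ (Fin D) → ℝ → ℝ)
    (u : EuclideanSpace ℝ (Fin D) → ℝ → EuclideanSpace ℝ (Fin D))
    (T : EuclideanSpace ℝ (Fin D) → ℝ → ℝ)
    (hρ_pos : ∀ x t, 0 < ρ x t) (hT_pos : ∀ x t, 0 < T x t)
    (hρ_smooth : ContDiff ℝ (⊤ : ℕ∞) (fun p : EuclideanSpace ℝ (Fin D) × ℝ => ρ p.1 p.2))
    (hu_smooth : ContDiff ℝ (⊤ : ℕ∞) (fun p : EuclideanSpace ℝ (Fin D) × ℝ => u p.1 p.2))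
    (hT_smooth : ContDiff ℝ (⊤ : ℕ∞) (fun p : EuclideanSpace ℝ (Fin D) × ℝ => T p.1 p.2))
    -- the Euler equations, used to eliminate the time derivatives
    (h_euler_mass : ∀ x t,
      deriv (fun s => ρ x s) t +
        ∑ α : Fin D, fderiv ℝ (fun y => ρ y t * u y t α) x (EuclideanSpace.single α 1)
        = 0)
    (h_euler_mom : ∀ x t, ∀ β : Fin D,
      deriv (fun s => ρ x s * u x s β) t +
        ∑ α : Fin D, fderiv ℝ
          (fun y => ρ y t * u y t α * u y t β +
            (if α = β then ρ y t * R₀ * T y t else 0)) x (EuclideanSpace.single α 1)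
        = 0)
    (h_euler_energy : ∀ x t,
      deriv (fun s => ρ x s * ((D * R₀ / 2) * T x s + ‖u x s‖ ^ 2 / 2)) t +
        ∑ α : Fin D, fderiv ℝ
          (fun y => (ρ y t * ((D * R₀ / 2) * T y t + ‖u y t‖ ^ 2 / 2) +
            ρ y t * R₀ * T y t) * u y t α) x (EuclideanSpace.single α 1)
        = 0)
    (f1 : EuclideanSpace ℝ (Fin D) → ℝ → EuclideanSpace ℝ (Fin D) → ℝ)
    (hf1 : ∀ x t ξ, f1 x t ξ =
      -τ * (deriv (fun s => maxwellian D (ρ x s) R₀ (T x s) (u x s) ξ) t +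
        ∑ α : Fin D, ξ α * fderiv ℝ
          (fun y => maxwellian D (ρ y t) R₀ (T y t) (u y t) ξ) x
          (EuclideanSpace.single α 1))) :
    ∀ x t, ∀ α β : Fin D,
      (∫ ξ : EuclideanSpace ℝ (Fin D), ξ α * ξ β * f1 x t ξ)
        = -(τ * (ρ x t * R₀ * T x t)) *
            (fderiv ℝ (fun y => u y t β) x (EuclideanSpace.single α 1) +
             fderiv ℝ (fun y => u y t α) x (EuclideanSpace.single β 1) -
             (2 / D) * (∑ γ : Fin D,
               fderiv ℝ (fun y => u y t γ) x (EuclideanSpace.single γ 1)) *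
               (if α = β then 1 else 0)) := by
  intro x t α β
  -- smoothness of the time and space slices
  have hρs : Differentiable ℝ fun y => ρ y t :=
    (hρ_smooth.comp (contDiff_id.prodMk contDiff_const)).differentiable (by simp)
  have hTs : Differentiable ℝ fun y => T y t :=
    (hT_smooth.comp (contDiff_id.prodMk contDiff_const)).differentiable (by simp)
  have hus : Differentiable ℝ fun y => u y t :=
    (hu_smooth.comp (contDiff_id.prodMk contDiff_const)).differentiable (by simp)
  have hρt : HasDerivAt (fun s => ρ x s) (deriv (fun s => ρ x s) t) t :=
    ((hρ_smooth.comp (contDiff_const.prodMk contDiff_id)).differentiable (by simp) t).hasDerivAt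
  have hTt : HasDerivAt (fun s => T x s) (deriv (fun s => T x s) t) t :=
    ((hT_smooth.comp (contDiff_const.prodMk contDiff_id)).differentiable (by simp) t).hasDerivAt
  have hut : HasDerivAt (fun s => u x s) (deriv (fun s => u x s) t) t :=
    ((hu_smooth.comp (contDiff_const.prodMk contDiff_id)).differentiable (by simp) t).hasDerivAt
  have hucs (γ : Fin D) : Differentiable ℝ fun y => u y t γ :=
    (EuclideanSpace.proj (𝕜 := ℝ) γ).differentiable.comp hus
  have hx (γ : Fin D) : x + (0 : ℝ) • EuclideanSpace.single γ (1 : ℝ) = x := by simp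
  -- derivatives along the coordinate lines through `x`
  have lρ (γ : Fin D) : HasDerivAt (fun s : ℝ => ρ (x + s • EuclideanSpace.single γ 1) t)
      (fderiv ℝ (fun y => ρ y t) x (EuclideanSpace.single γ 1)) 0 :=
    (hρs x).hasFDerivAt.hasLineDerivAt _
  have lT (γ : Fin D) : HasDerivAt (fun s : ℝ => T (x + s • EuclideanSpace.single γ 1) t)
      (fderiv ℝ (fun y => T y t) x (EuclideanSpace.single γ 1)) 0 :=
    (hTs x).hasFDerivAt.hasLineDerivAt _
  have lu (γ : Fin D) : HasDerivAt (fun s : ℝ => u (x + s • EuclideanSpace.single γ 1) t)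
      (fderiv ℝ (fun y => u y t) x (EuclideanSpace.single γ 1)) 0 :=
    (hus x).hasFDerivAt.hasLineDerivAt _
  have hG (γ δ : Fin D) : fderiv ℝ (fun y => u y t δ) x (EuclideanSpace.single γ 1) =
      fderiv ℝ (fun y => u y t) x (EuclideanSpace.single γ 1) δ :=
    fderiv_apply_eq (hucs δ x) (hasDerivAt_coord (lu γ) δ)
  set ρt := deriv (fun s => ρ x s) t
  set Tt := deriv (fun s => T x s) t
  set ut := deriv (fun s => u x s) t
  set ρx : Fin D → ℝ := fun γ => fderiv ℝ (fun y => ρ y t) x (EuclideanSpace.single γ 1) with hρx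
  set Tx : Fin D → ℝ := fun γ => fderiv ℝ (fun y => T y t) x (EuclideanSpace.single γ 1) with hTx
  set G : Fin D → Fin D → ℝ :=
    fun γ δ => fderiv ℝ (fun y => u y t) x (EuclideanSpace.single γ 1) δ with hGdef
  have lρ' (γ : Fin D) : HasDerivAt (fun s : ℝ => ρ (x + s • EuclideanSpace.single γ 1) t)
      (ρx γ) 0 := lρ γ
  have lT' (γ : Fin D) : HasDerivAt (fun s : ℝ => T (x + s • EuclideanSpace.single γ 1) t)
      (Tx γ) 0 := lT γ
  have lu' (γ δ : Fin D) : HasDerivAt (fun s : ℝ => u (x + s • EuclideanSpace.single γ 1) t δ)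
      (G γ δ) 0 := hasDerivAt_coord (lu γ) δ
  have hK : ‖u x t‖ ^ 2 = ∑ β, u x t β * u x t β := by
    rw [EuclideanSpace.real_norm_sq_eq]
    exact Finset.sum_congr rfl fun _ _ => sq _
  have hK2 (γ : Fin D) : HasDerivAt
      (fun s : ℝ => ‖u (x + s • EuclideanSpace.single γ 1) t‖ ^ 2 / 2) (∑ β, u x t β * G γ β) 0 :=
    (hasDerivAt_half_norm_sq (lu γ)).congr_deriv (by simp only [hx, hGdef])
  have mass : ρt + ∑ γ, (ρx γ * u x t γ + ρ x t * G γ γ) = 0 := by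
    rw [← h_euler_mass x t]
    refine congrArg (ρt + ·) (Finset.sum_congr rfl fun γ _ => ?_)
    refine (fderiv_apply_eq (by fun_prop) (((lρ' γ).fun_mul (lu' γ γ)).congr_deriv ?_)).symm
    simp only [hx]
  have mom (b : Fin D) : ρt * u x t b + ρ x t * ut b +
      ∑ a, ((ρx a * u x t a + ρ x t * G a a) * u x t b + ρ x t * u x t a * G a b +
        if a = b then ρx a * R₀ * T x t + ρ x t * R₀ * Tx a else 0) = 0 := by
    refine Eq.trans ?_ (h_euler_mom x t b)
    rw [(hρt.fun_mul (hasDerivAt_coord hut b)).deriv]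
    congr 1
    refine Finset.sum_congr rfl fun a _ => ?_
    have h1 := ((lρ' a).fun_mul (lu' a a)).fun_mul (lu' a b)
    split_ifs with hab
    · refine (fderiv_apply_eq (by fun_prop)
        ((h1.fun_add (((lρ' a).mul_const R₀).fun_mul (lT' a))).congr_deriv ?_)).symm
      simp only [hx]
    · simp only [add_zero]
      refine (fderiv_apply_eq (by fun_prop) (h1.congr_deriv ?_)).symm
      simp only [hx]
  have energy : ρt * (D * R₀ / 2 * T x t + (∑ b, u x t b * u x t b) / 2) +
      ρ x t * (D * R₀ / 2 * Tt + ∑ b, u x t b * ut b) +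
      ∑ a, ((ρx a * (D * R₀ / 2 * T x t + (∑ b, u x t b * u x t b) / 2) +
          ρ x t * (D * R₀ / 2 * Tx a + ∑ b, u x t b * G a b) +
          (ρx a * R₀ * T x t + ρ x t * R₀ * Tx a)) * u x t a +
        (ρ x t * (D * R₀ / 2 * T x t + (∑ b, u x t b * u x t b) / 2) + ρ x t * R₀ * T x t) *
          G a a) = 0 := by
    rw [← hK, ← h_euler_energy x t, (hρt.fun_mul ((hTt.const_mul (D * R₀ / 2)).fun_add
      (hasDerivAt_half_norm_sq hut))).deriv]
    congr 1
    refine Finset.sum_congr rfl fun a _ => ?_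
    have hn : DifferentiableAt ℝ (fun y => ‖u y t‖ ^ 2) x := (hus x).norm_sq ℝ
    refine (fderiv_apply_eq (by fun_prop)
      (((((lρ' a).fun_mul (((lT' a).const_mul (D * R₀ / 2)).fun_add (hK2 a))).fun_add
        (((lρ' a).mul_const R₀).fun_mul (lT' a))).fun_mul (lu' a a)).congr_deriv ?_)).symm
    simp only [hx]
  obtain ⟨eρ, eu, eT⟩ := euler_primitive hD hR₀ (hρ_pos x t) mass mom energy
  have hρ0 := hρ_pos x t
  have hT0 := hT_pos x t
  have hθ : 0 < R₀ * T x t := by positivity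
  set A : Fin D → Fin D → ℝ :=
    fun γ δ => (G γ δ - if γ = δ then (∑ α, G α α) / D else 0) / (R₀ * T x t) with hA
  have hD0 : (D : ℝ) ≠ 0 := by positivity
  have hA0 : ∑ γ, A γ γ = 0 := by
    simp only [hA, if_true, ← Finset.sum_div, Finset.sum_sub_distrib, Finset.sum_const,
      Finset.card_univ, Fintype.card_fin, nsmul_eq_mul]
    field_simp
    simp
  -- the distribution `f1` in terms of the peculiar velocity `ξ - u`
  have hf (ξ : EuclideanSpace ℝ (Fin D)) : f1 x t ξ =
      -τ * (maxwellian D (ρ x t) R₀ (T x t) (u x t) ξ *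
        (∑ γ, ∑ δ, A γ δ * ((ξ - u x t) γ * (ξ - u x t) δ) +
          (∑ γ, Tx γ / T x t * (ξ - u x t) γ) *
          ((∑ δ, (ξ - u x t) δ * (ξ - u x t) δ) / (2 * (R₀ * T x t)) - (D + 2) / 2))) := by
    rw [hf1, (hasDerivAt_maxwellian hR₀ hρt hTt hut hρ0 hT0 ξ).deriv,
      ← log_deriv_eq hD hR₀ hρ0 hT0 eρ eu eT (fun γ => (ξ - u x t) γ)]
    refine congrArg (-τ * ·) (Eq.trans ?_ (mul_add _ _ _).symm)
    rw [Finset.mul_sum]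
    refine congrArg₂ (· + ·) rfl ?_
    refine Finset.sum_congr rfl fun a _ => ?_
    have hd : DifferentiableAt ℝ
        (fun y => maxwellian D (ρ y t) R₀ (T y t) (u y t) ξ) x := by
      have hn : DifferentiableAt ℝ (fun y => ‖ξ - u y t‖ ^ 2) x :=
        ((hus x).const_sub ξ).norm_sq ℝ
      have hZ : DifferentiableAt ℝ (fun y => (2 * π * R₀ * T y t) ^ ((D : ℝ) / 2)) x :=
        ((hTs x).const_mul (2 * π * R₀)).rpow_const (Or.inl (by positivity))
      have hZ0 : (2 * π * R₀ * T x t) ^ ((D : ℝ) / 2) ≠ 0 := by positivity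
      have h2 : 2 * R₀ * T x t ≠ 0 := by positivity
      unfold maxwellian
      simp only [div_eq_mul_inv] at hZ hZ0 ⊢
      exact ((hρs x).fun_mul (hZ.fun_inv hZ0)).fun_mul
        (hn.fun_neg.fun_mul (((hTs x).const_mul (2 * R₀)).fun_inv h2)).exp
    rw [fderiv_apply_eq hd (hasDerivAt_maxwellian hR₀ (lρ' a) (lT' a) (lu a)
      (by rw [hx]; exact hρ0) (by rw [hx]; exact hT0) ξ)]
    simp only [hx, PiLp.sub_apply, sub_add_cancel, hGdef]
    ring
  have hshift : ∫ ξ : EuclideanSpace ℝ (Fin D), ξ α * ξ β * f1 x t ξ =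
      ∫ c : EuclideanSpace ℝ (Fin D),
        (c + u x t) α * (c + u x t) β * f1 x t (c + u x t) :=
    (integral_add_right_eq_self (fun ξ => ξ α * ξ β * f1 x t ξ) (u x t)).symm
  rw [hshift]
  simp only [hf, maxwellian_eq, add_sub_cancel_right, PiLp.add_apply]
  have key := stress_moment hθ A hA0 (fun γ => Tx γ / T x t) (u x t) α β
  rw [integral_gaussWeight hθ] at key
  have hZ0 : (2 * π * (R₀ * T x t)) ^ ((D : ℝ) / 2) ≠ 0 := by positivity
  rw [mul_assoc (2 * π) R₀ (T x t)]
  set Z := (2 * π * (R₀ * T x t)) ^ ((D : ℝ) / 2)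
  calc _ = ∫ c : EuclideanSpace ℝ (Fin D), (-τ * (ρ x t / Z)) *
        ((c α + u x t α) * (c β + u x t β) * (∑ γ, ∑ δ, A γ δ * (c γ * c δ) +
          (∑ γ, Tx γ / T x t * c γ) *
          ((∑ δ, c δ * c δ) / (2 * (R₀ * T x t)) - (D + 2) / 2)) *
          gaussWeight D (R₀ * T x t) c) := by
        congr 1; ext c; ring
    _ = _ := by
        rw [integral_const_mul, key]
        simp only [hG, hA, eq_comm (a := β)]
        change _ = -(τ * (ρ x t * R₀ * T x t)) * (G α β + G β α - 2 / D * (∑ γ, G γ γ) * _)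
        generalize (∑ γ, G γ γ) = d
        split_ifs <;> (field_simp; ring)
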